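/- arXiv:2408.08218 — 2 statements merged into one kernel-verified Lean document; each statement's English description precedes it below -/
import Mathlib

section
/- For every integer m ≥ 4, the identity f^cyc_m(X) = X·f_{m-3}(X^4) + 1 + f_{m-1}(X^2) holds in F_2[X]. -/
open Polynomial

/-- `fibSet m` is the set of fibbinary integers below `2^m`: integers in `{0,…,2^m-1}`
whose binary representation has no two consecutive ones. -/
noncomputable def fibSet (m : ℕ) : Finset ℕ :=
  @Finset.filter _ (fun i => ∀ j : ℕ, ¬(i.testBit j ∧ i.testBit (j + 1)))
    (Classical.decPred _) (Finset.range (2 ^ m))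

/-- `fibCycSet m` is the set of integers in `{1,…,2^m-2}` whose `m`-bit binary
representation has no two cyclically consecutive ones. -/
def fibCycSet (m : ℕ) : Finset ℕ :=
  (Finset.Icc 1 (2 ^ m - 2)).filter
    (fun i => ∀ j < m, ¬(i.testBit j ∧ i.testBit ((j + 1) % m)))

/-- The `m`-th fibbinary polynomial over `F_2`. -/
noncomputable def fibPoly (m : ℕ) : Polynomial (ZMod 2) :=
  ∑ i ∈ fibSet m, X ^ i

/-- The `m`-th cyclic fibbinary polynomial over `F_2`. -/
noncomputable def fibCycPoly (m : ℕ) : Polynomial (ZMod 2) :=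
  ∑ i ∈ fibCycSet m, X ^ i

/-! A nonzero member of `fibCycSet m` is a number below `2 ^ m` with no two adjacent ones and not
both end bits one, and zero is such a number as well. Reading the low bits of such an `n`: if
`n = 2 * i`, the wrap-around condition is empty and `i` is any fibbinary number with `m - 1` bits;
if `n` is odd, its second bit and its top bit vanish, so `n = 4 * i + 1` where `i` is any fibbinary
number with `m - 3` bits. Over `F_2` the contribution `1` of zero can be moved across the
equation. -/

theorem lt_two_pow_iff_lt_succ_and_not_testBit {n k : ℕ} :
    n < 2 ^ k ↔ n < 2 ^ (k + 1) ∧ ¬n.testBit k := by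
  constructor
  · intro hn
    exact ⟨by lia, by simp [Nat.testBit_eq_false_of_lt hn]⟩
  · rintro ⟨hn, htop⟩
    by_contra! hge
    exact htop (Nat.testBit_of_two_pow_le_and_two_pow_add_one_gt hge hn)

/-- A natural number is fibbinary if its binary representation has no two consecutive ones. The
condition is put on all bit positions, so that it does not depend on a bit length. -/
def IsFibbinary (n : ℕ) : Prop :=
  ∀ j, ¬(n.testBit j ∧ n.testBit (j + 1))

theorem mem_fibSet {m n : ℕ} : n ∈ fibSet m ↔ n < 2 ^ m ∧ IsFibbinary n := by
  rw [fibSet, @Finset.mem_filter _ _ (Classical.decPred _), Finset.mem_range, IsFibbinary]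

theorem isFibbinary_iff_div_two {n : ℕ} :
    IsFibbinary n ↔ n % 4 ≠ 3 ∧ IsFibbinary (n / 2) := by
  have low_bits : n % 4 ≠ 3 ↔ ¬(n.testBit 0 ∧ n.testBit 1) := by
    simp only [Nat.testBit_succ, Nat.testBit_zero, decide_eq_true_eq]
    lia
  simp only [IsFibbinary, low_bits, Nat.testBit_div_two]
  exact Nat.and_forall_add_one.symm

theorem isFibbinary_two_mul {n : ℕ} : IsFibbinary (2 * n) ↔ IsFibbinary n := by
  rw [isFibbinary_iff_div_two, Nat.mul_div_cancel_left n two_pos]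
  exact and_iff_right (by lia)

theorem isFibbinary_four_mul_add_one {n : ℕ} : IsFibbinary (4 * n + 1) ↔ IsFibbinary n := by
  rw [isFibbinary_iff_div_two, show (4 * n + 1) / 2 = 2 * n by lia, isFibbinary_two_mul]
  exact and_iff_right (by lia)

theorem forall_cyclic_not_testBit_and_iff {n k : ℕ} (hn : n < 2 ^ (k + 1)) :
    (∀ j < k + 1, ¬(n.testBit j ∧ n.testBit ((j + 1) % (k + 1)))) ↔
      IsFibbinary n ∧ ¬(n.testBit k ∧ n.testBit 0) := by
  have high_bits (j : ℕ) (hj : k ≤ j) : n.testBit (j + 1) = false :=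
    Nat.testBit_eq_false_of_lt (hn.trans_le (Nat.pow_le_pow_right two_pos (by lia)))
  constructor
  · intro h
    refine ⟨fun j hj ↦ ?_, by simpa using h k k.lt_succ_self⟩
    obtain hjk | hjk := lt_or_ge j k
    · exact h j (by lia) (by rwa [Nat.mod_eq_of_lt (by lia)])
    · simp [high_bits j hjk] at hj
  · rintro ⟨hfib, hends⟩ j hj
    obtain rfl | hjk := eq_or_ne j k
    · rwa [Nat.mod_self]
    · rw [Nat.mod_eq_of_lt (by lia)]
      exact hfib j

theorem mem_insert_zero_fibCycSet {n k : ℕ} :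
    n ∈ insert 0 (fibCycSet (k + 1)) ↔
      n < 2 ^ (k + 1) ∧ IsFibbinary n ∧ ¬(n.testBit k ∧ n.testBit 0) := by
  have two_le : 2 ≤ 2 ^ (k + 1) := Nat.le_self_pow k.succ_ne_zero 2
  simp only [Finset.mem_insert, fibCycSet, Finset.mem_filter, Finset.mem_Icc]
  constructor
  · rintro (rfl | ⟨hn, hcyc⟩)
    · simp [IsFibbinary]
    · have hlt : n < 2 ^ (k + 1) := by lia
      exact ⟨hlt, (forall_cyclic_not_testBit_and_iff hlt).1 hcyc⟩
  · rintro ⟨hlt, hfib⟩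
    have hne : n ≠ 2 ^ (k + 1) - 1 := by
      rintro rfl
      exact hfib.2 (by simp only [Nat.testBit_two_pow_sub_one, decide_eq_true_eq]; lia)
    have hcyc := (forall_cyclic_not_testBit_and_iff hlt).2 hfib
    exact or_iff_not_imp_left.2 fun h0 ↦ ⟨by lia, hcyc⟩

theorem two_mul_mem_insert_zero_fibCycSet {i k : ℕ} :
    2 * i ∈ insert 0 (fibCycSet (k + 1)) ↔ i ∈ fibSet k := by
  have hlt : 2 * i < 2 ^ (k + 1) ↔ i < 2 ^ k := by lia
  have hlow : ¬(2 * i).testBit 0 := by simp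
  rw [mem_insert_zero_fibCycSet, mem_fibSet, hlt, isFibbinary_two_mul]
  tauto

theorem four_mul_add_one_mem_insert_zero_fibCycSet {i k : ℕ} :
    4 * i + 1 ∈ insert 0 (fibCycSet (k + 3)) ↔ i ∈ fibSet k := by
  have hlt : 4 * i + 1 < 2 ^ (k + 3) ↔ i < 2 ^ (k + 1) := by lia
  have hlow : (4 * i + 1).testBit 0 := by simp only [Nat.testBit_zero, decide_eq_true_eq]; lia
  have htop : (4 * i + 1).testBit (k + 2) = i.testBit k := by
    rw [Nat.testBit_add, show (4 * i + 1) / 2 ^ 2 = i by lia]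
  rw [mem_insert_zero_fibCycSet, mem_fibSet, hlt, htop, isFibbinary_four_mul_add_one,
    lt_two_pow_iff_lt_succ_and_not_testBit (k := k)]
  tauto

theorem insert_zero_fibCycSet {m : ℕ} (hm : 3 ≤ m) :
    insert 0 (fibCycSet m) =
      (fibSet (m - 3)).image (4 * · + 1) ∪ (fibSet (m - 1)).image (2 * ·) := by
  obtain ⟨k, rfl⟩ := Nat.exists_eq_add_of_le' hm
  ext n
  simp only [Finset.mem_union, Finset.mem_image, Nat.add_sub_cancel, Nat.add_succ_sub_one,
    ← four_mul_add_one_mem_insert_zero_fibCycSet (k := k),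
    ← two_mul_mem_insert_zero_fibCycSet (k := k + 2)]
  constructor
  · intro hn
    have hmod : n % 4 ≠ 3 := (isFibbinary_iff_div_two.1 (mem_insert_zero_fibCycSet.1 hn).2.1).1
    obtain ⟨i, rfl⟩ | ⟨i, rfl⟩ : (∃ i, n = 4 * i + 1) ∨ ∃ i, n = 2 * i := by
      obtain h | h : n % 4 = 1 ∨ n % 2 = 0 := by lia
      · exact .inl ⟨n / 4, by lia⟩
      · exact .inr ⟨n / 2, by lia⟩
    · exact .inl ⟨i, hn, rfl⟩
    · exact .inr ⟨i, hn, rfl⟩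
  · rintro (⟨i, hi, rfl⟩ | ⟨i, hi, rfl⟩) <;> exact hi

theorem fibCycPoly_eq_general {R : Type*} [Semiring R] (x : R) {m : ℕ} (hm : 3 ≤ m) :
    ∑ i ∈ fibCycSet m, x ^ i + 1 =
      x * ∑ i ∈ fibSet (m - 3), (x ^ 4) ^ i + ∑ i ∈ fibSet (m - 1), (x ^ 2) ^ i := by
  have zero_notMem : 0 ∉ fibCycSet m := by simp [fibCycSet]
  have disjoint_images : Disjoint ((fibSet (m - 3)).image (4 * · + 1))
      ((fibSet (m - 1)).image (2 * ·)) := by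
    simp only [Finset.disjoint_left, Finset.mem_image]
    lia
  calc
    ∑ i ∈ fibCycSet m, x ^ i + 1 = ∑ i ∈ insert 0 (fibCycSet m), x ^ i := by
      rw [Finset.sum_insert zero_notMem, pow_zero, add_comm]
    _ = ∑ i ∈ fibSet (m - 3), x ^ (4 * i + 1) + ∑ i ∈ fibSet (m - 1), x ^ (2 * i) := by
      rw [insert_zero_fibCycSet hm, Finset.sum_union disjoint_images,
        Finset.sum_image (fun _ _ _ _ h ↦ by lia), Finset.sum_image (fun _ _ _ _ h ↦ by lia)]
    _ = x * ∑ i ∈ fibSet (m - 3), (x ^ 4) ^ i + ∑ i ∈ fibSet (m - 1), (x ^ 2) ^ i := by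
      simp only [pow_succ', pow_mul, Finset.mul_sum]

theorem fibCycPoly_eq (m : ℕ) (hm : 4 ≤ m) :
    fibCycPoly m =
      X * (fibPoly (m - 3)).comp (X ^ 4) + 1 + (fibPoly (m - 1)).comp (X ^ 2) := by
  simp only [fibCycPoly, fibPoly, sum_comp, X_pow_comp]
  rw [add_right_comm, ← CharTwo.add_eq_iff_eq_add]
  exact fibCycPoly_eq_general X (by lia)
end

section
/- For every integer m ≥ 3, the identity 1 + f_m(X) = X·f_{m-1}(X)·f_{m-2}(X)^2 holds in F_2[X]. -/
/-!
An element of `fibSet (m + 2)` is either `2 * n` with `n ∈ fibSet (m + 1)` or `4 * n + 1` with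
`n ∈ fibSet m`. Together with the Frobenius map this gives `f_{m+2} = f_{m+1}^2 + X f_m^4`. In
characteristic two this recurrence makes the defect `1 + f_{m+2} + X f_{m+1} f_m^2` square whenever
`m` increases by one, and the defect vanishes for `m = 0`.
-/

open Polynomial

lemma one_add_add_mul_sq_of_charTwo {R : Type*} [CommSemiring R] [CharP R 2] {x a b c d : R}
    (hc : c = b ^ 2 + x * a ^ 4) (hd : d = c ^ 2 + x * b ^ 4) :
    1 + d + x * c * b ^ 2 = (1 + c + x * b * a ^ 2) ^ 2 := by
  have hbc : b ^ 2 + c = x * a ^ 4 := by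
    rw [hc, CharTwo.add_cancel_left]
  calc
    1 + d + x * c * b ^ 2 = 1 + c ^ 2 + x * b ^ 2 * (b ^ 2 + c) := by rw [hd]; ring
    _ = 1 ^ 2 + c ^ 2 + (x * b * a ^ 2) ^ 2 := by rw [hbc]; ring
    _ = (1 + c + x * b * a ^ 2) ^ 2 := by rw [CharTwo.add_sq, CharTwo.add_sq]

lemma mem_fibSet_s5 {m i : ℕ} :
    i ∈ fibSet m ↔ i < 2 ^ m ∧ ∀ j, ¬(i.testBit j ∧ i.testBit (j + 1)) := by
  simp [fibSet]

lemma mem_fibSet_add_one {m i : ℕ} : i ∈ fibSet (m + 1) ↔ i % 4 ≠ 3 ∧ i / 2 ∈ fibSet m := by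
  have hbits : ¬(i.testBit 0 ∧ i.testBit 1) ↔ i % 4 ≠ 3 := by
    simp only [Nat.testBit_add_one i 0, Nat.testBit_zero, decide_eq_true_eq]
    omega
  have hlt : i < 2 ^ (m + 1) ↔ i / 2 < 2 ^ m := by
    rw [pow_succ]
    omega
  rw [mem_fibSet_s5, mem_fibSet_s5, ← Nat.and_forall_add_one, zero_add, hbits, hlt]
  simp only [Nat.testBit_add_one]
  exact and_left_comm

lemma fibSet_zero : fibSet 0 = {0} := by
  ext i
  simp +contextual [mem_fibSet_s5]

lemma fibSet_one : fibSet 1 = {0, 1} := by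
  ext i
  simp only [mem_fibSet_add_one, fibSet_zero, Finset.mem_singleton, Finset.mem_insert]
  omega

lemma two_mul_mem_fibSet_add_one {m n : ℕ} : 2 * n ∈ fibSet (m + 1) ↔ n ∈ fibSet m := by
  rw [mem_fibSet_add_one, Nat.mul_div_cancel_left n two_pos]
  exact and_iff_right (by omega)

lemma four_mul_add_one_mem_fibSet_add_two {m n : ℕ} :
    4 * n + 1 ∈ fibSet (m + 2) ↔ n ∈ fibSet m := by
  rw [mem_fibSet_add_one, show (4 * n + 1) / 2 = 2 * n by omega, two_mul_mem_fibSet_add_one]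
  exact and_iff_right (by omega)

lemma fibSet_add_two (m : ℕ) :
    fibSet (m + 2) = (fibSet (m + 1)).image (2 * ·) ∪ (fibSet m).image (4 * · + 1) := by
  ext i
  simp only [Finset.mem_union, Finset.mem_image]
  constructor
  · intro hi
    have hi3 : i % 4 ≠ 3 := (mem_fibSet_add_one.1 hi).1
    obtain heven | hone : 2 * (i / 2) = i ∨ 4 * (i / 4) + 1 = i := by omega
    · exact .inl ⟨i / 2, two_mul_mem_fibSet_add_one.1 (heven.symm ▸ hi), heven⟩
    · exact .inr ⟨i / 4, four_mul_add_one_mem_fibSet_add_two.1 (hone.symm ▸ hi), hone⟩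
  · rintro (⟨n, hn, rfl⟩ | ⟨n, hn, rfl⟩)
    · exact two_mul_mem_fibSet_add_one.2 hn
    · exact four_mul_add_one_mem_fibSet_add_two.2 hn

lemma sum_fibSet_add_two {M : Type*} [AddCommMonoid M] (g : ℕ → M) (m : ℕ) :
    ∑ i ∈ fibSet (m + 2), g i =
      ∑ n ∈ fibSet (m + 1), g (2 * n) + ∑ n ∈ fibSet m, g (4 * n + 1) := by
  have hdisj : Disjoint ((fibSet (m + 1)).image (2 * ·)) ((fibSet m).image (4 * · + 1)) := by
    simp only [Finset.disjoint_left, Finset.mem_image]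
    rintro _ ⟨a, -, rfl⟩ ⟨b, -, h⟩
    omega
  have htwo : Function.Injective fun n : ℕ ↦ 2 * n := mul_right_injective₀ two_ne_zero
  have hfour : Function.Injective fun n : ℕ ↦ 4 * n + 1 := fun a b h ↦ by simpa using h
  rw [fibSet_add_two, Finset.sum_union hdisj, Finset.sum_image htwo.injOn,
    Finset.sum_image hfour.injOn]

lemma fibPoly_zero : fibPoly 0 = 1 := by
  simp [fibPoly, fibSet_zero]

lemma fibPoly_one : fibPoly 1 = 1 + X := by
  simp [fibPoly, fibSet_one]

lemma fibPoly_pow_two_pow (m k : ℕ) : fibPoly m ^ 2 ^ k = ∑ i ∈ fibSet m, X ^ (2 ^ k * i) := by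
  simp only [fibPoly, sum_pow_char_pow, ← pow_mul, mul_comm]

lemma fibPoly_add_two (m : ℕ) :
    fibPoly (m + 2) = fibPoly (m + 1) ^ 2 + X * fibPoly m ^ 4 := by
  have hsq : fibPoly (m + 1) ^ 2 = ∑ n ∈ fibSet (m + 1), X ^ (2 * n) :=
    fibPoly_pow_two_pow (m + 1) 1
  have hfour : fibPoly m ^ 4 = ∑ n ∈ fibSet m, X ^ (4 * n) := fibPoly_pow_two_pow m 2
  calc
    fibPoly (m + 2) = ∑ n ∈ fibSet (m + 1), X ^ (2 * n) + ∑ n ∈ fibSet m, X ^ (4 * n + 1) :=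
      sum_fibSet_add_two (X ^ ·) m
    _ = fibPoly (m + 1) ^ 2 + X * fibPoly m ^ 4 := by
      simp only [hsq, hfour, Finset.mul_sum, pow_succ']

lemma one_add_fibPoly_add_two (m : ℕ) :
    1 + fibPoly (m + 2) = X * fibPoly (m + 1) * fibPoly m ^ 2 := by
  rw [← CharTwo.add_eq_zero]
  induction m with
  | zero =>
    rw [fibPoly_add_two, zero_add, fibPoly_zero, fibPoly_one, CharTwo.add_sq]
    linear_combination (1 + X + X ^ 2) * (CharTwo.two_eq_zero : (2 : (ZMod 2)[X]) = 0)
  | succ m ih =>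
    rw [one_add_add_mul_sq_of_charTwo (fibPoly_add_two m) (fibPoly_add_two (m + 1)), ih,
      zero_pow two_ne_zero]

theorem one_add_fibPoly (m : ℕ) (hm : 3 ≤ m) :
    1 + fibPoly m = X * fibPoly (m - 1) * (fibPoly (m - 2)) ^ 2 := by
  obtain ⟨k, rfl⟩ : ∃ k, m = k + 2 := Nat.exists_eq_add_of_le' (by omega)
  exact one_add_fibPoly_add_two k
end
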